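/- Let W ∈ ℝ^{m×n} with m ≥ n have full column rank, and define the polyhedral max norm on ℝⁿ by ‖x‖_W := ‖Wx‖∞. Let A ∈ ℝ^{n×n}, and let μ_W(A) be the real number such that (‖I+hA‖_W − 1)/h → μ_W(A) as h → 0⁺, where ‖·‖_W also denotes the operator norm on ℝ^{n×n} induced by the vector norm ‖·‖_W. For H ∈ ℝ^{m×m} write μ∞(H) := max_{i} ( H_{ii} + Σ_{j≠i} |H_{ij}| ) (the ℓ∞ logarithmic norm). Then: (a) there exists H* ∈ ℝ^{m×m} with W·A = H*·W and μ∞(H*) = μ_W(A); and (b) for every H ∈ ℝ^{m×m} with W·A = H·W one has μ_W(A) ≤ μ∞(H). Consequently μ_W(A) equals the minimum of μ∞(H) over all H satisfying W·A = H·W, and this minimum is attained. -/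

import Mathlib

/-!
If `W * A = H * W`, then `W * (1 + h • A) = (1 + h • H) * W`, so the polyhedral norm of `1 + h • A`
is at most the `ℓ∞` operator norm of `1 + h • H`, which equals `1 + h * μ∞(H)` for small `h > 0`.
This gives the lower bound.

Conversely, the Hahn–Banach theorem applied row by row gives `K` with `W * (1 + h • A) = K * W`
whose `ℓ∞` operator norm is exactly the polyhedral norm of `1 + h • A`. So `H = h⁻¹ • (K - 1)` has
`W * A = H * W` and `μ∞(H) ≤ (‖1 + h • A‖_W - 1) / h`. These `H` may be unbounded as `h → 0⁺`, so
compactness is not available. But `μ∞(H) ≤ t` is one linear inequality in `(H, t)` per row and sign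
pattern, so the pairs `(H * W, t)` with `μ∞(H) ≤ t` form the linear image of a polyhedral cone. Such
an image is closed, and hence contains the limit `(W * A, μ_W(A))`.
-/

open Filter Topology

section Factorization

theorem toMatrix'_mul_of_comp_mulVecLin_eq {R l m n : Type*} [CommSemiring R]
    [Fintype m] [DecidableEq m] [Fintype n] {φ : (m → R) →ₗ[R] l → R} {W : Matrix m n R}
    {M : Matrix l n R} (h : φ ∘ₗ W.mulVecLin = M.mulVecLin) : LinearMap.toMatrix' φ * W = M := by
  classical
  refine Matrix.toLin'.injective ?_
  rw [Matrix.toLin'_mul, Matrix.toLin'_toMatrix', Matrix.toLin'_apply', Matrix.toLin'_apply', h]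

theorem exists_comp_eq_of_ker_le_ker {K V V₁ V₂ : Type*} [DivisionRing K]
    [AddCommGroup V] [Module K V] [AddCommGroup V₁] [Module K V₁] [AddCommGroup V₂] [Module K V₂]
    (f : V →ₗ[K] V₁) (g : V →ₗ[K] V₂) (h : LinearMap.ker f ≤ LinearMap.ker g) :
    ∃ φ : V₁ →ₗ[K] V₂, φ ∘ₗ f = g := by
  obtain ⟨φ, hφ⟩ := LinearMap.exists_extend
    ((LinearMap.ker f).liftQ g h ∘ₗ f.quotKerEquivRange.symm.toLinearMap)
  refine ⟨φ, LinearMap.ext fun v => ?_⟩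
  have hv := LinearMap.congr_fun hφ (f.quotKerEquivRange ((LinearMap.ker f).mkQ v))
  simpa using hv

/-- Hahn–Banach, applied to each coordinate separately: this is where the `ℓ∞` norm on the
codomain matters. -/
theorem exists_continuousLinearMap_norm_le_of_norm_le_mul_norm {𝕜 V E ι : Type*} [RCLike 𝕜]
    [AddCommGroup V] [Module 𝕜 V] [NormedAddCommGroup E] [NormedSpace 𝕜 E] [Fintype ι]
    (f : V →ₗ[𝕜] E) (g : V →ₗ[𝕜] ι → 𝕜) {c : ℝ} (hc : 0 ≤ c) (h : ∀ v, ‖g v‖ ≤ c * ‖f v‖) :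
    ∃ φ : E →L[𝕜] ι → 𝕜, (∀ v, φ (f v) = g v) ∧ ‖φ‖ ≤ c := by
  have hker : LinearMap.ker f ≤ LinearMap.ker g := fun v hv => by
    simpa [LinearMap.mem_ker.mp hv] using h v
  obtain ⟨ψ, rfl⟩ := exists_comp_eq_of_ker_le_ker f g hker
  have hψ : ∀ i (y : LinearMap.range f), ‖ψ y i‖ ≤ c * ‖y‖ := by
    rintro i ⟨_, v, rfl⟩
    exact (norm_le_pi_norm _ i).trans (h v)
  have hcoord : ∀ i, ∃ φ : StrongDual 𝕜 E, (∀ v, φ (f v) = ψ (f v) i) ∧ ‖φ‖ ≤ c := by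
    intro i
    obtain ⟨φ, hφ, hnorm⟩ := exists_extension_norm_eq (LinearMap.range f)
      (((LinearMap.proj i ∘ₗ ψ).domRestrict (LinearMap.range f)).mkContinuous c (hψ i))
    exact ⟨φ, fun v => hφ ⟨f v, v, rfl⟩, hnorm.trans_le (LinearMap.mkContinuous_norm_le _ hc _)⟩
  choose φ hφ hnorm using hcoord
  exact ⟨ContinuousLinearMap.pi φ, fun v => funext fun i => hφ i v,
    ContinuousLinearMap.norm_pi_le_of_le hnorm hc⟩

end Factorization

section PolyhedralCone

theorem exists_forall_nonneg_add_mul_and_exists_eq_zero {ι : Type*} {s : Finset ι} {a b : ι → ℝ}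
    (ha : ∀ k ∈ s, 0 ≤ a k) (hb : ∃ k ∈ s, b k < 0) :
    ∃ t, (∀ k ∈ s, 0 ≤ a k + t * b k) ∧ ∃ k ∈ s, a k + t * b k = 0 := by
  obtain ⟨k₀, hk₀, hbk₀⟩ := hb
  obtain ⟨k, hk, hmin⟩ := Finset.exists_min_image (s.filter (b · < 0)) (fun k => a k / -b k)
    ⟨k₀, by simp [hk₀, hbk₀]⟩
  obtain ⟨hks, hbk⟩ := Finset.mem_filter.mp hk
  refine ⟨a k / -b k, fun j hj => ?_, k, hks, by simp [div_neg, hbk.ne]⟩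
  rcases lt_or_ge (b j) 0 with hbj | hbj
  · have := (le_div_iff₀ (neg_pos.mpr hbj)).mp (hmin j (Finset.mem_filter.mpr ⟨hj, hbj⟩))
    linarith
  · have ht : 0 ≤ a k / -b k := div_nonneg (ha k hks) (neg_pos.mpr hbk).le
    have := ha j hj
    positivity

variable {E F ι : Type*} [AddCommGroup E] [Module ℝ E] [AddCommGroup F] [Module ℝ F]

/-- Moving along `d` until the first constraint becomes tight does not change the value of `f`, so
it suffices to consider the facets of the cone. -/
theorem image_setOf_nonneg_eq_biUnion_of_neg [DecidableEq ι] (f : E →ₗ[ℝ] F)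
    (g : ι → E →ₗ[ℝ] ℝ) {s : Finset ι} {V : Submodule ℝ E} {d : E} (hdV : d ∈ V) (hfd : f d = 0)
    (hd : ∃ k ∈ s, g k d < 0) :
    f '' {x | x ∈ V ∧ ∀ k ∈ s, 0 ≤ g k x} =
      ⋃ k ∈ s, f '' {x | x ∈ V ⊓ LinearMap.ker (g k) ∧ ∀ j ∈ s.erase k, 0 ≤ g j x} := by
  apply Set.Subset.antisymm
  · rintro _ ⟨x, ⟨hxV, hx⟩, rfl⟩
    obtain ⟨t, ht, k, hk, hkt⟩ := exists_forall_nonneg_add_mul_and_exists_eq_zero hx hd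
    have hg : ∀ j, g j (x + t • d) = g j x + t * g j d := fun j => by simp
    refine Set.mem_iUnion₂.mpr ⟨k, hk, x + t • d, ⟨⟨?_, ?_⟩, fun j hj => ?_⟩, by simp [hfd]⟩
    · exact V.add_mem hxV (V.smul_mem t hdV)
    · exact (hg k).trans hkt
    · exact (hg j).symm ▸ ht j (Finset.mem_of_mem_erase hj)
  · refine Set.iUnion₂_subset fun k _ => Set.image_mono ?_
    rintro x ⟨⟨hxV, hxk⟩, hx⟩
    refine ⟨hxV, fun j hj => ?_⟩
    rcases eq_or_ne j k with rfl | hjk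
    · exact (LinearMap.mem_ker.mp hxk).ge
    · exact hx j (Finset.mem_erase.mpr ⟨hjk, hj⟩)

variable [TopologicalSpace F] [IsTopologicalAddGroup F] [ContinuousSMul ℝ F] [T2Space F]
  [FiniteDimensional ℝ F]

theorem isClosed_image_setOf_nonneg_of_ker_le_ker (f : E →ₗ[ℝ] F) (g : ι → E →ₗ[ℝ] ℝ)
    {s : Set ι} {V : Submodule ℝ E} (h : ∀ d ∈ V, f d = 0 → ∀ k ∈ s, g k d = 0) :
    IsClosed (f '' {x | x ∈ V ∧ ∀ k ∈ s, 0 ≤ g k x}) := by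
  have hfactor : ∀ k : s, ∃ φ : F →ₗ[ℝ] ℝ, φ ∘ₗ f.domRestrict V = (g k).domRestrict V :=
    fun k => exists_comp_eq_of_ker_le_ker _ _ fun d hd => h d d.2 hd k k.2
  choose φ hφ using hfactor
  have hφ' : ∀ k, ∀ x ∈ V, φ k (f x) = g k x := fun k x hx => LinearMap.congr_fun (hφ k) ⟨x, hx⟩
  have himage : f '' {x | x ∈ V ∧ ∀ k ∈ s, 0 ≤ g k x} =
      (V.map f : Set F) ∩ ⋂ k, {y | 0 ≤ φ k y} := by
    ext y
    simp only [Set.mem_inter_iff, Set.mem_iInter]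
    constructor
    · rintro ⟨x, ⟨hxV, hx⟩, rfl⟩
      exact ⟨⟨x, hxV, rfl⟩, fun k => (hx k k.2).trans_eq (hφ' k x hxV).symm⟩
    · rintro ⟨⟨x, hxV, rfl⟩, hx⟩
      exact ⟨x, ⟨hxV, fun k hk => (hx ⟨k, hk⟩).trans_eq (hφ' ⟨k, hk⟩ x hxV)⟩, rfl⟩
  rw [himage]
  exact (V.map f).closed_of_finiteDimensional.inter <| isClosed_iInter fun k =>
    isClosed_le continuous_const (φ k).continuous_of_finiteDimensional

theorem isClosed_image_submodule_inter_setOf_nonneg (f : E →ₗ[ℝ] F) (g : ι → E →ₗ[ℝ] ℝ)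
    (s : Finset ι) (V : Submodule ℝ E) :
    IsClosed (f '' {x | x ∈ V ∧ ∀ k ∈ s, 0 ≤ g k x}) := by
  classical
  induction s using Finset.strongInduction generalizing V with
  | H s ih =>
    by_cases hd : ∃ d ∈ V, f d = 0 ∧ ∃ k ∈ s, g k d < 0
    · obtain ⟨d, hdV, hfd, hneg⟩ := hd
      rw [image_setOf_nonneg_eq_biUnion_of_neg f g hdV hfd hneg]
      exact s.finite_toSet.isClosed_biUnion fun k hk => ih _ (Finset.erase_ssubset hk) _
    · push Not at hd
      refine isClosed_image_setOf_nonneg_of_ker_le_ker (s := s) f g fun d hdV hfd k hk => ?_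
      have hneg := hd (-d) (V.neg_mem hdV) (by simp [hfd]) k hk
      exact le_antisymm (by simpa using hneg) (hd d hdV hfd k hk)

theorem isClosed_image_setOf_forall_nonneg [Finite ι] (f : E →ₗ[ℝ] F) (g : ι → E →ₗ[ℝ] ℝ) :
    IsClosed (f '' {x | ∀ k, 0 ≤ g k x}) := by
  have := Fintype.ofFinite ι
  simpa using isClosed_image_submodule_inter_setOf_nonneg f g Finset.univ ⊤

end PolyhedralCone

theorem sum_abs_le_iff_forall_sum_sign_mul_le {ι : Type*} {s : Finset ι} {a : ι → ℝ} {t : ℝ} :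
    ∑ j ∈ s, |a j| ≤ t ↔ ∀ σ : ι → SignType, ∑ j ∈ s, σ j * a j ≤ t := by
  refine ⟨fun h σ => (Finset.sum_le_sum fun j _ => ?_).trans h, fun h => ?_⟩
  · rcases σ j with _ | _ | _
    · simp
    · simpa using neg_le_abs (a j)
    · simpa using le_abs_self (a j)
  · simpa [mul_comm, self_mul_sign] using h fun j => SignType.sign (a j)

section LinftyLogNorm

variable {m n : Type*} [Fintype m] [DecidableEq m]

/-- The logarithmic norm of a square matrix with respect to the `ℓ∞` norm, given by its explicit
formula. It has the junk value `0` if the index type is empty. -/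
noncomputable def linftyLogNorm (H : Matrix m m ℝ) : ℝ :=
  ⨆ i, (H i i + ∑ j ∈ Finset.univ.erase i, |H i j|)

theorem linftyLogNorm_le_iff [Nonempty m] {H : Matrix m m ℝ} {t : ℝ} :
    linftyLogNorm H ≤ t ↔ ∀ i, H i i + ∑ j ∈ Finset.univ.erase i, |H i j| ≤ t :=
  ciSup_le_iff (Set.finite_range _).bddAbove

theorem linftyLogNorm_le_iff_forall_sign [Nonempty m] {H : Matrix m m ℝ} {t : ℝ} :
    linftyLogNorm H ≤ t ↔
      ∀ k : m × (m → SignType), H k.1 k.1 + ∑ j ∈ Finset.univ.erase k.1, k.2 j * H k.1 j ≤ t := by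
  simp only [linftyLogNorm_le_iff, ← le_sub_iff_add_le', sum_abs_le_iff_forall_sum_sign_mul_le,
    Prod.forall]

theorem isClosed_setOf_exists_mul_eq_and_linftyLogNorm_le [Nonempty m] [Finite n]
    (W : Matrix m n ℝ) :
    IsClosed {p : Matrix m n ℝ × ℝ | ∃ H : Matrix m m ℝ, H * W = p.1 ∧ linftyLogNorm H ≤ p.2} := by
  have := Fintype.ofFinite n
  let entry (i j : m) : Matrix m m ℝ × ℝ →ₗ[ℝ] ℝ :=
    Matrix.entryLinearMap ℝ ℝ i j ∘ₗ LinearMap.fst ℝ (Matrix m m ℝ) ℝ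
  let slack (k : m × (m → SignType)) : Matrix m m ℝ × ℝ →ₗ[ℝ] ℝ :=
    LinearMap.snd ℝ (Matrix m m ℝ) ℝ -
      (entry k.1 k.1 + ∑ j ∈ Finset.univ.erase k.1, (k.2 j : ℝ) • entry k.1 j)
  let mulW : Matrix m m ℝ →ₗ[ℝ] Matrix m n ℝ :=
    { toFun := fun H => H * W
      map_add' := fun H H' => Matrix.add_mul H H' W
      map_smul' := fun c H => Matrix.smul_mul c H W }
  have hslack : ∀ x : Matrix m m ℝ × ℝ, (∀ k, 0 ≤ slack k x) ↔ linftyLogNorm x.1 ≤ x.2 := by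
    intro x
    simp [linftyLogNorm_le_iff_forall_sign, slack, entry]
  convert isClosed_image_setOf_forall_nonneg (mulW.prodMap LinearMap.id) slack using 1
  ext ⟨M, t⟩
  simp only [hslack]
  constructor
  · rintro ⟨H, rfl, ht⟩
    exact ⟨(H, t), ht, rfl⟩
  · rintro ⟨⟨H, _⟩, ht, heq⟩
    obtain ⟨rfl, rfl⟩ := Prod.ext_iff.mp heq
    exact ⟨H, rfl, ht⟩

end LinftyLogNorm

open scoped Matrix Matrix.Norms.Operator

section LinftyOpNorm

variable {m n : Type*} [Fintype m] [Fintype n]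

theorem linfty_opNorm_le_iff [Nonempty m] {α : Type*} [SeminormedAddCommGroup α]
    {K : Matrix m n α} {c : ℝ} : ‖K‖ ≤ c ↔ ∀ i, ∑ j, ‖K i j‖ ≤ c := by
  change ‖fun i => WithLp.toLp 1 (K i)‖ ≤ c ↔ _
  simp only [pi_norm_le_iff_of_nonempty, PiLp.norm_eq_of_L1]

theorem exists_mul_eq_and_norm_le {𝕜 l : Type*} [RCLike 𝕜] [Fintype l]
    {W : Matrix m n 𝕜} {M : Matrix l n 𝕜} {c : ℝ} (hc : 0 ≤ c)
    (h : ∀ z, ‖M *ᵥ z‖ ≤ c * ‖W *ᵥ z‖) : ∃ K : Matrix l m 𝕜, K * W = M ∧ ‖K‖ ≤ c := by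
  classical
  obtain ⟨φ, hφ, hnorm⟩ :=
    exists_continuousLinearMap_norm_le_of_norm_le_mul_norm W.mulVecLin M.mulVecLin hc h
  exact ⟨LinearMap.toMatrix' φ.toLinearMap,
    toMatrix'_mul_of_comp_mulVecLin_eq (LinearMap.ext hφ), by simpa using hnorm⟩

variable [DecidableEq m]

theorem sum_abs_one_add_smul_apply (H : Matrix m m ℝ) {h : ℝ} (hh : 0 ≤ h) (i : m) :
    ∑ j, |(1 + h • H) i j| = |1 + h * H i i| + h * ∑ j ∈ Finset.univ.erase i, |H i j| := by
  rw [← Finset.add_sum_erase _ _ (Finset.mem_univ i), Finset.mul_sum]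
  congr 1
  · simp
  · refine Finset.sum_congr rfl fun j hj => ?_
    simp [Matrix.one_apply_ne (Finset.ne_of_mem_erase hj).symm, abs_mul, abs_of_nonneg hh]

theorem one_add_mul_linftyLogNorm_le_norm [Nonempty m] (H : Matrix m m ℝ) {h : ℝ} (hh : 0 < h) :
    1 + h * linftyLogNorm H ≤ ‖1 + h • H‖ := by
  rw [← le_sub_iff_add_le', ← le_div_iff₀' hh, linftyLogNorm_le_iff]
  intro i
  have hrow := linfty_opNorm_le_iff.mp (le_refl ‖1 + h • H‖) i
  simp only [Real.norm_eq_abs, sum_abs_one_add_smul_apply H hh.le] at hrow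
  rw [le_div_iff₀' hh]
  linarith [le_abs_self (1 + h * H i i)]

theorem eventually_norm_one_add_smul_eq [Nonempty m] (H : Matrix m m ℝ) :
    ∀ᶠ h in 𝓝[>] (0 : ℝ), ‖1 + h • H‖ = 1 + h * linftyLogNorm H := by
  have hdiag : ∀ᶠ h in 𝓝[>] (0 : ℝ), ∀ i, 0 < 1 + h * H i i := by
    refine eventually_nhdsWithin_of_eventually_nhds (eventually_all.mpr fun i => ?_)
    have hcont : ContinuousAt (fun h => 1 + h * H i i) 0 := by fun_prop
    exact hcont.eventually (lt_mem_nhds (by simp))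
  filter_upwards [hdiag, self_mem_nhdsWithin] with h hpos (hh : 0 < h)
  refine le_antisymm (linfty_opNorm_le_iff.mpr fun i => ?_) (one_add_mul_linftyLogNorm_le_norm H hh)
  calc ∑ j, ‖(1 + h • H) i j‖
      = 1 + h * (H i i + ∑ j ∈ Finset.univ.erase i, |H i j|) := by
        simp only [Real.norm_eq_abs, sum_abs_one_add_smul_apply H hh.le, abs_of_pos (hpos i)]
        ring
    _ ≤ 1 + h * linftyLogNorm H := by
        gcongr
        exact linftyLogNorm_le_iff.mp le_rfl i

end LinftyOpNorm

section PolyhedralOpNorm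

variable {m n : Type*} [Fintype m] [Fintype n]

/-- The operator norm of `B` induced by the polyhedral max norm `z ↦ ‖W z‖∞`, which is only a
seminorm if `W` has a kernel. The supremum has the junk value `0` if it is taken over a set that is
empty or unbounded. -/
noncomputable def polyhedralOpNorm (W : Matrix m n ℝ) (B : Matrix n n ℝ) : ℝ :=
  sSup {r | ∃ z, ‖W *ᵥ z‖ = 1 ∧ r = ‖W *ᵥ B *ᵥ z‖}

theorem polyhedralOpNorm_nonneg (W : Matrix m n ℝ) (B : Matrix n n ℝ) :
    0 ≤ polyhedralOpNorm W B := by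
  apply Real.sSup_nonneg
  rintro _ ⟨z, -, rfl⟩
  exact norm_nonneg _

theorem norm_mulVec_mulVec_le_of_mul_eq_mul {W : Matrix m n ℝ} {B : Matrix n n ℝ}
    {K : Matrix m m ℝ} (hK : W * B = K * W) (z : n → ℝ) : ‖W *ᵥ B *ᵥ z‖ ≤ ‖K‖ * ‖W *ᵥ z‖ := by
  rw [Matrix.mulVec_mulVec, hK, ← Matrix.mulVec_mulVec]
  exact Matrix.linfty_opNorm_mulVec K (W *ᵥ z)

theorem polyhedralOpNorm_le_norm_of_mul_eq_mul {W : Matrix m n ℝ} {B : Matrix n n ℝ}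
    {K : Matrix m m ℝ} (hK : W * B = K * W) : polyhedralOpNorm W B ≤ ‖K‖ := by
  refine Real.sSup_le ?_ (norm_nonneg K)
  rintro _ ⟨z, hz, rfl⟩
  simpa [hz] using norm_mulVec_mulVec_le_of_mul_eq_mul hK z

theorem norm_mulVec_mulVec_le_polyhedralOpNorm_mul {W : Matrix m n ℝ} {B : Matrix n n ℝ}
    {K : Matrix m m ℝ} (hK : W * B = K * W) (z : n → ℝ) :
    ‖W *ᵥ B *ᵥ z‖ ≤ polyhedralOpNorm W B * ‖W *ᵥ z‖ := by
  rcases (norm_nonneg (W *ᵥ z)).eq_or_lt' with hz | hz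
  · simpa [hz] using norm_mulVec_mulVec_le_of_mul_eq_mul hK z
  have hbdd : BddAbove {r | ∃ z, ‖W *ᵥ z‖ = 1 ∧ r = ‖W *ᵥ B *ᵥ z‖} := by
    refine ⟨‖K‖, ?_⟩
    rintro _ ⟨z, hz, rfl⟩
    simpa [hz] using norm_mulVec_mulVec_le_of_mul_eq_mul hK z
  rw [← div_le_iff₀ hz]
  refine le_csSup hbdd ⟨‖W *ᵥ z‖⁻¹ • z, ?_, ?_⟩
  · rw [Matrix.mulVec_smul, norm_smul, norm_inv, norm_norm, inv_mul_cancel₀ hz.ne']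
  · rw [Matrix.mulVec_smul, Matrix.mulVec_smul, norm_smul, norm_inv, norm_norm, div_eq_inv_mul]

theorem exists_mul_eq_mul_and_norm_eq_polyhedralOpNorm {W : Matrix m n ℝ} {B : Matrix n n ℝ}
    {K₀ : Matrix m m ℝ} (hK₀ : W * B = K₀ * W) :
    ∃ K : Matrix m m ℝ, W * B = K * W ∧ ‖K‖ = polyhedralOpNorm W B := by
  obtain ⟨K, hK, hnorm⟩ := exists_mul_eq_and_norm_le (polyhedralOpNorm_nonneg W B) fun z =>
    (Matrix.mulVec_mulVec z W B ▸ norm_mulVec_mulVec_le_polyhedralOpNorm_mul hK₀ z :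
      ‖(W * B) *ᵥ z‖ ≤ polyhedralOpNorm W B * ‖W *ᵥ z‖)
  exact ⟨K, hK.symm, hnorm.antisymm (polyhedralOpNorm_le_norm_of_mul_eq_mul hK.symm)⟩

theorem nonempty_of_tendsto_polyhedralOpNorm_sub_one_div [DecidableEq n] {W : Matrix m n ℝ}
    {A : Matrix n n ℝ} {μ : ℝ}
    (hμ : Tendsto (fun h : ℝ => (polyhedralOpNorm W (1 + h • A) - 1) / h) (𝓝[>] 0) (𝓝 μ)) :
    Nonempty m := by
  by_contra hm
  rw [not_nonempty_iff] at hm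
  have hquot : ∀ h : ℝ, (polyhedralOpNorm W (1 + h • A) - 1) / h = -h⁻¹ := fun h => by
    simp [polyhedralOpNorm, Subsingleton.elim (W *ᵥ _) 0, neg_div]
  simp only [hquot] at hμ
  exact not_tendsto_nhds_of_tendsto_atBot (tendsto_neg_atTop_atBot.comp tendsto_inv_nhdsGT_zero)
    μ hμ

variable [DecidableEq m] [DecidableEq n]

theorem mul_one_add_smul_eq_iff {W : Matrix m n ℝ} {A : Matrix n n ℝ} {H : Matrix m m ℝ} {h : ℝ}
    (hh : h ≠ 0) : W * (1 + h • A) = (1 + h • H) * W ↔ W * A = H * W := by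
  simp [Matrix.mul_add, Matrix.add_mul, hh]

theorem le_linftyLogNorm_of_tendsto [Nonempty m] {W : Matrix m n ℝ} {A : Matrix n n ℝ}
    {H : Matrix m m ℝ} (hH : W * A = H * W) {μ : ℝ}
    (hμ : Tendsto (fun h : ℝ => (polyhedralOpNorm W (1 + h • A) - 1) / h) (𝓝[>] 0) (𝓝 μ)) :
    μ ≤ linftyLogNorm H := by
  refine le_of_tendsto hμ ?_
  filter_upwards [eventually_norm_one_add_smul_eq H, self_mem_nhdsWithin] with h hnorm (hh : 0 < h)
  rw [div_le_iff₀' hh, sub_le_iff_le_add', ← hnorm]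
  exact polyhedralOpNorm_le_norm_of_mul_eq_mul ((mul_one_add_smul_eq_iff hh.ne').mpr hH)

theorem exists_linftyLogNorm_le_polyhedralOpNorm_sub_one_div [Nonempty m] {W : Matrix m n ℝ}
    {A : Matrix n n ℝ} {H₀ : Matrix m m ℝ} (hH₀ : W * A = H₀ * W) {h : ℝ} (hh : 0 < h) :
    ∃ H : Matrix m m ℝ, W * A = H * W ∧
      linftyLogNorm H ≤ (polyhedralOpNorm W (1 + h • A) - 1) / h := by
  obtain ⟨K, hK, hnorm⟩ := exists_mul_eq_mul_and_norm_eq_polyhedralOpNorm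
    ((mul_one_add_smul_eq_iff hh.ne').mpr hH₀)
  obtain ⟨H, rfl⟩ : ∃ H, K = 1 + h • H := ⟨h⁻¹ • (K - 1), by simp [smul_smul, hh.ne']⟩
  refine ⟨H, (mul_one_add_smul_eq_iff hh.ne').mp hK, ?_⟩
  rw [le_div_iff₀' hh, le_sub_iff_add_le', ← hnorm]
  exact one_add_mul_linftyLogNorm_le_norm H hh

theorem exists_linftyLogNorm_le_of_tendsto [Nonempty m] {W : Matrix m n ℝ} {A : Matrix n n ℝ}
    {H₀ : Matrix m m ℝ} (hH₀ : W * A = H₀ * W) {μ : ℝ}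
    (hμ : Tendsto (fun h : ℝ => (polyhedralOpNorm W (1 + h • A) - 1) / h) (𝓝[>] 0) (𝓝 μ)) :
    ∃ H : Matrix m m ℝ, W * A = H * W ∧ linftyLogNorm H ≤ μ := by
  have hlim : (W * A, μ) ∈ {p : Matrix m n ℝ × ℝ | ∃ H : Matrix m m ℝ,
      H * W = p.1 ∧ linftyLogNorm H ≤ p.2} := by
    refine (isClosed_setOf_exists_mul_eq_and_linftyLogNorm_le W).mem_of_tendsto
      (tendsto_const_nhds.prodMk_nhds hμ) ?_
    filter_upwards [self_mem_nhdsWithin] with h hh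
    obtain ⟨H, hH, hle⟩ := exists_linftyLogNorm_le_polyhedralOpNorm_sub_one_div hH₀ hh
    exact ⟨H, hH.symm, hle⟩
  obtain ⟨H, hH, hle⟩ := hlim
  exact ⟨H, hH.symm, hle⟩

theorem polyhedral_lognorm_eq_min_linear_program_general {W : Matrix m n ℝ} {A : Matrix n n ℝ}
    (hA : LinearMap.ker W.mulVecLin ≤ LinearMap.ker (W * A).mulVecLin) {μ : ℝ}
    (hμ : Tendsto (fun h : ℝ => (polyhedralOpNorm W (1 + h • A) - 1) / h) (𝓝[>] 0) (𝓝 μ)) :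
    IsLeast (linftyLogNorm '' {H | W * A = H * W}) μ := by
  have := nonempty_of_tendsto_polyhedralOpNorm_sub_one_div hμ
  obtain ⟨φ, hφ⟩ := exists_comp_eq_of_ker_le_ker _ _ hA
  have hlower : ∀ H, W * A = H * W → μ ≤ linftyLogNorm H :=
    fun H hH => le_linftyLogNorm_of_tendsto hH hμ
  obtain ⟨H, hH, hle⟩ :=
    exists_linftyLogNorm_le_of_tendsto (toMatrix'_mul_of_comp_mulVecLin_eq hφ).symm hμ
  exact ⟨⟨H, hH, hle.antisymm (hlower H hH)⟩, Set.forall_mem_image.mpr hlower⟩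

end PolyhedralOpNorm

theorem iSup_abs_eq_norm {ι : Type*} [Fintype ι] (v : ι → ℝ) : ⨆ i, |v i| = ‖v‖ := by
  refine le_antisymm (Real.iSup_le (norm_le_pi_norm v) (norm_nonneg v)) ?_
  rw [pi_norm_le_iff_of_nonneg (Real.iSup_nonneg fun i => abs_nonneg (v i))]
  exact fun i => le_ciSup (f := fun i => |v i|) (Set.finite_range _).bddAbove i

/-- the logarithmic norm induced by the polyhedral max norm
`‖x‖_W = ‖Wx‖∞` equals the minimum of the `ℓ∞` logarithmic norm `μ∞(H)` over
all matrices `H` satisfying `W·A = H·W`, and this minimum is attained. -/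
theorem polyhedral_lognorm_eq_min_linear_program
    (m n : ℕ) (hmn : n ≤ m)
    (W : Matrix (Fin m) (Fin n) ℝ) (hW : Function.Injective W.mulVecLin)
    (A : Matrix (Fin n) (Fin n) ℝ)
    (NW : (Fin n → ℝ) → ℝ) (hNW : ∀ z : Fin n → ℝ, NW z = ⨆ i, |W.mulVec z i|)
    (opW : Matrix (Fin n) (Fin n) ℝ → ℝ)
    (hopW : ∀ B : Matrix (Fin n) (Fin n) ℝ,
      opW B = sSup {r : ℝ | ∃ z : Fin n → ℝ, NW z = 1 ∧ r = NW (B.mulVec z)})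
    (muInf : Matrix (Fin m) (Fin m) ℝ → ℝ)
    (hmuInf : ∀ H : Matrix (Fin m) (Fin m) ℝ,
      muInf H = ⨆ i, (H i i + ∑ j ∈ Finset.univ.erase i, |H i j|))
    (μWA : ℝ)
    (hμ : Tendsto (fun h : ℝ => (opW (1 + h • A) - 1) / h) (𝓝[>] (0:ℝ)) (𝓝 μWA)) :
    (∃ Hstar : Matrix (Fin m) (Fin m) ℝ, W * A = Hstar * W ∧ muInf Hstar = μWA) ∧
    (∀ H : Matrix (Fin m) (Fin m) ℝ, W * A = H * W → μWA ≤ muInf H) := by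
  obtain rfl : NW = fun z => ‖W *ᵥ z‖ := funext fun z => (hNW z).trans (iSup_abs_eq_norm _)
  obtain rfl : opW = polyhedralOpNorm W := funext hopW
  obtain rfl : muInf = linftyLogNorm := funext hmuInf
  have hker : LinearMap.ker W.mulVecLin ≤ LinearMap.ker (W * A).mulVecLin :=
    (LinearMap.ker_eq_bot.mpr hW).trans_le bot_le
  exact (polyhedral_lognorm_eq_min_linear_program_general hker hμ).imp id Set.forall_mem_image.mp
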